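/- Let X be a measurable space, T a positive integer, V > 0, ρ > 0, G ≥ 0. Let f, g : X → ℝ and let π* be a probability measure on X with respect to which f and g are integrable and E_{π*}[g] ≤ 0. Suppose there exists κ* ≥ 0 with 2κ* ≤ ρ such that f(x) − κ*·g(x) ≤ E_{π*}[f] for every x ∈ X. For each t = 1, …, T let β_t ≥ 0, β̃_t ≥ 0, let σ_t, σ̃_t : X → ℝ, and let f̄_t, ḡ_t : X → ℝ be integrable with respect to π* and satisfy, for all x ∈ X, f(x) ≤ f̄_t(x) ≤ f(x) + 2β_t·σ_t(x) and g(x) − 2β̃_t·σ̃_t(x) ≤ ḡ_t(x) ≤ g(x). Let x_t ∈ X with |ḡ_t(x_t)| ≤ G, let φ_1 = 0 and φ_{t+1} = Proj_{[0,ρ]}(φ_t + ḡ_t(x_t)/V), and suppose f̄_t(x_t) − φ_t·ḡ_t(x_t) ≥ f̄_t(x) − φ_t·ḡ_t(x) for all x ∈ X. Then [∑_{t=1}^T g(x_t)]_+ ≤ (2/ρ)·( 2·∑_{t=1}^T β_t·σ_t(x_t) + 2ρ·∑_{t=1}^T β̃_t·σ̃_t(x_t) + (V/2)·ρ² + T·G²/(2V)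 ). -/

import Mathlib

/-!
The dual variable `φ` performs projected gradient steps on `[0, ρ]`, so the standard telescoping
estimate against the fixed comparator `ρ` (`sum_dual_gap_le`) gives
`∑ (ρ - φ t) * gbar t (x t) ≤ V / 2 * ρ ^ 2 + T * G ^ 2 / (2 * V)`.

On the other hand, averaging the greedy optimality over `π` yields
`∫ f ∂π ≤ fbar t (x t) - φ t * gbar t (x t)` (`integral_le_of_greedy`), because `fbar` is optimistic
for `f`, and `∫ gbar t ∂π ≤ ∫ g ∂π ≤ 0` while `φ t ≥ 0`. Passing from `fbar`, `gbar` to `f`, `g` by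
the confidence widths and summing bounds the regret plus `ρ` times the violation
`S = ∑ g (x t)` by the bracket on the right-hand side. The dual certificate, evaluated at the
actions, says the regret is at least `-κ * S`, so `(ρ - κ) * S` is at most the bracket. For `S ≥ 0`
this gives the claim since `ρ - κ ≥ ρ / 2`; for `S < 0` it suffices that the bracket is nonnegative.
-/

open Finset MeasureTheory

/-- Projecting onto `[0, ρ]` does not increase the distance to its endpoint `ρ`. -/
lemma sq_proj_sub_le {ρ : ℝ} (hρ : 0 ≤ ρ) (y : ℝ) :
    (min ρ (max 0 y) - ρ) ^ 2 ≤ (y - ρ) ^ 2 := by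
  rcases le_total y 0 with h | h
  · rw [max_eq_left h, min_eq_right hρ]
    nlinarith
  · rw [max_eq_right h]
    rcases le_total ρ y with hle | hle
    · rw [min_eq_left hle]
      nlinarith [sq_nonneg (y - ρ)]
    · rw [min_eq_right hle]

/-- One projected step: the gain `(ρ - a) * u` is paid for by the decrease of the potential
`V / 2 * (a - ρ) ^ 2`, up to a second-order error. -/
lemma dual_step_le {V ρ G a u : ℝ} (hV : 0 < V) (hρ : 0 ≤ ρ) (hu : |u| ≤ G) :
    (ρ - a) * u ≤ V / 2 * (a - ρ) ^ 2 - V / 2 * (min ρ (max 0 (a + u / V)) - ρ) ^ 2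
      + G ^ 2 / (2 * V) := by
  have h1 := mul_le_mul_of_nonneg_left (sq_proj_sub_le hρ (a + u / V)) (half_pos hV).le
  have h2 : V / 2 * (a + u / V - ρ) ^ 2
      = V / 2 * (a - ρ) ^ 2 - (ρ - a) * u + u ^ 2 / (2 * V) := by
    field_simp
    ring
  have h3 : u ^ 2 / (2 * V) ≤ G ^ 2 / (2 * V) := by
    have : u ^ 2 ≤ G ^ 2 := sq_le_sq' (abs_le.mp hu).1 (abs_le.mp hu).2
    gcongr
  linarith

/-- The projected-gradient regret bound against the comparator `ρ`, with the final potential kept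
so that the induction closes. -/
lemma sum_dual_gap_le {V ρ G : ℝ} (hV : 0 < V) (hρ : 0 ≤ ρ) (u φ : ℕ → ℝ) (hφ1 : φ 1 = 0) (n : ℕ)
    (hu : ∀ t ∈ Finset.Icc 1 n, |u t| ≤ G)
    (hrec : ∀ t ∈ Finset.Icc 1 n, φ (t + 1) = min ρ (max 0 (φ t + u t / V))) :
    ∑ t ∈ Finset.Icc 1 n, (ρ - φ t) * u t ≤
      V / 2 * ρ ^ 2 - V / 2 * (φ (n + 1) - ρ) ^ 2 + (n : ℝ) * (G ^ 2 / (2 * V)) := by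
  induction n with
  | zero => simp [hφ1]
  | succ n ih =>
    have hsub : Finset.Icc 1 n ⊆ Finset.Icc 1 (n + 1) := Finset.Icc_subset_Icc_right n.le_succ
    have hmem : n + 1 ∈ Finset.Icc 1 (n + 1) := by simp
    have hih := ih (fun t ht => hu t (hsub ht)) (fun t ht => hrec t (hsub ht))
    have hstep := dual_step_le (a := φ (n + 1)) hV hρ (hu _ hmem)
    rw [← hrec _ hmem] at hstep
    rw [Finset.sum_Icc_succ_top (by omega)]
    push_cast
    linarith

/-- Every pointwise upper bound of the optimistic Lagrangian is at least the expected reward of any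
feasible distribution. -/
lemma integral_le_of_greedy {X : Type*} [MeasurableSpace X] {π : Measure X} [IsProbabilityMeasure π]
    {f g fb gb : X → ℝ} (hf : Integrable f π) (hg : Integrable g π) (hfb : Integrable fb π)
    (hgb : Integrable gb π) (hgneg : ∫ y, g y ∂π ≤ 0) (hffb : ∀ y, f y ≤ fb y)
    (hgbg : ∀ y, gb y ≤ g y) {p M : ℝ} (hp : 0 ≤ p) (hM : ∀ y, fb y - p * gb y ≤ M) :
    ∫ y, f y ∂π ≤ M := by
  have h1 : ∫ y, f y ∂π ≤ ∫ y, fb y ∂π := integral_mono hf hfb hffb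
  have h2 : ∫ y, gb y ∂π ≤ ∫ y, g y ∂π := integral_mono hgb hg hgbg
  have h3 : ∫ y, (fb y - p * gb y) ∂π ≤ M := by
    simpa using integral_mono (hfb.sub (hgb.const_mul p)) (integrable_const M) hM
  rw [integral_sub hfb (hgb.const_mul p), integral_const_mul] at h3
  nlinarith [mul_nonneg hp (neg_nonneg.mpr (h2.trans hgneg))]

/-- Deterministic constraint-violation core of Theorem 1 for CKB-UCB. -/
theorem ckb_ucb_violation_core {X : Type*} [MeasurableSpace X]
    (T : ℕ) (hT : 0 < T) (V ρ G : ℝ) (hV : 0 < V) (hρ : 0 < ρ) (hG : 0 ≤ G)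
    (f g : X → ℝ) (π : Measure X) [IsProbabilityMeasure π]
    (hf : Integrable f π) (hg : Integrable g π) (hgneg : ∫ y, g y ∂π ≤ 0)
    (hdual : ∃ κ : ℝ, 0 ≤ κ ∧ 2 * κ ≤ ρ ∧ ∀ y : X, f y - κ * g y ≤ ∫ z, f z ∂π)
    (β βt : ℕ → ℝ) (hβ : ∀ t ∈ Finset.Icc 1 T, 0 ≤ β t)
    (hβt : ∀ t ∈ Finset.Icc 1 T, 0 ≤ βt t)
    (σ σtil : ℕ → X → ℝ) (fbar gbar : ℕ → X → ℝ)
    (hfbar_int : ∀ t ∈ Finset.Icc 1 T, Integrable (fbar t) π)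
    (hgbar_int : ∀ t ∈ Finset.Icc 1 T, Integrable (gbar t) π)
    (hf_sandwich : ∀ t ∈ Finset.Icc 1 T, ∀ x : X,
      f x ≤ fbar t x ∧ fbar t x ≤ f x + 2 * β t * σ t x)
    (hg_sandwich : ∀ t ∈ Finset.Icc 1 T, ∀ x : X,
      g x - 2 * βt t * σtil t x ≤ gbar t x ∧ gbar t x ≤ g x)
    (x : ℕ → X)
    (hGb : ∀ t ∈ Finset.Icc 1 T, |gbar t (x t)| ≤ G)
    (φ : ℕ → ℝ) (hφ1 : φ 1 = 0)
    (hrec : ∀ t ∈ Finset.Icc 1 T, φ (t + 1) = min ρ (max 0 (φ t + gbar t (x t) / V)))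
    (hgreedy : ∀ t ∈ Finset.Icc 1 T, ∀ y : X,
      fbar t y - φ t * gbar t y ≤ fbar t (x t) - φ t * gbar t (x t)) :
    max (∑ t ∈ Finset.Icc 1 T, g (x t)) 0 ≤
      2 / ρ * (2 * ∑ t ∈ Finset.Icc 1 T, β t * σ t (x t)
        + 2 * ρ * ∑ t ∈ Finset.Icc 1 T, βt t * σtil t (x t)
        + V / 2 * ρ ^ 2 + (T : ℝ) * G ^ 2 / (2 * V)) := by
  obtain ⟨κ, -, hκρ, hκ⟩ := hdual
  have hφ : ∀ t ∈ Finset.Icc 1 T, 0 ≤ φ t := by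
    intro t ht
    obtain ⟨h1, hTle⟩ := Finset.mem_Icc.mp ht
    rcases h1.eq_or_lt with rfl | h
    · exact hφ1.ge
    · obtain ⟨s, rfl⟩ : ∃ s, t = s + 1 := ⟨t - 1, by omega⟩
      rw [hrec s (Finset.mem_Icc.mpr ⟨by omega, by omega⟩)]
      exact le_min hρ.le (le_max_left _ _)
  have hgap := sum_dual_gap_le hV hρ.le (fun t => gbar t (x t)) φ hφ1 T hGb hrec
  -- Regret–violation decomposition in one round, with the regret already replaced by its
  -- lower bound `-κ * g (x t)` from the dual certificate.
  have hround : ∀ t ∈ Finset.Icc 1 T, (ρ - κ) * g (x t) ≤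
      2 * (β t * σ t (x t)) + 2 * ρ * (βt t * σtil t (x t)) + (ρ - φ t) * gbar t (x t) := by
    intro t ht
    have hopt := integral_le_of_greedy hf hg (hfbar_int t ht) (hgbar_int t ht) hgneg
      (fun y => (hf_sandwich t ht y).1) (fun y => (hg_sandwich t ht y).2) (hφ t ht) (hgreedy t ht)
    have hfx := (hf_sandwich t ht (x t)).2
    have hgx := mul_le_mul_of_nonneg_left (hg_sandwich t ht (x t)).1 hρ.le
    have hκx := hκ (x t)
    linarith
  have hsum := Finset.sum_le_sum hround
  simp only [Finset.sum_add_distrib, ← Finset.mul_sum] at hsum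
  -- The sandwich inequalities force the widths to be nonnegative.
  have hW : 0 ≤ ∑ t ∈ Finset.Icc 1 T, β t * σ t (x t) := Finset.sum_nonneg fun t ht => by
    have := hf_sandwich t ht (x t)
    linarith
  have hWt : 0 ≤ ∑ t ∈ Finset.Icc 1 T, βt t * σtil t (x t) := Finset.sum_nonneg fun t ht => by
    have := hg_sandwich t ht (x t)
    linarith
  have hpot : 0 ≤ V / 2 * (φ (T + 1) - ρ) ^ 2 := by positivity
  rw [← mul_div_assoc] at hgap
  apply max_le
  · rw [div_mul_eq_mul_div, le_div_iff₀ hρ]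
    rcases le_total 0 (∑ t ∈ Finset.Icc 1 T, g (x t)) with hS | hS
    · have hhalf := mul_le_mul_of_nonneg_right (show ρ ≤ 2 * (ρ - κ) by linarith) hS
      linarith
    · have hSρ := mul_nonpos_of_nonpos_of_nonneg hS hρ.le
      exact hSρ.trans (by positivity)
  · positivity
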